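/- Let T ∈ (0,∞) and let (s,u) and (σ,v) be solutions of problem (P) on (0,T] with initial data (s₀,φ) ∈ W and (σ₀,ψ) ∈ W, respectively. Let M > 0 be such that 0 ≤ φ(x) ≤ M(s₀ − x) on [0,s₀] and 0 ≤ ψ(x) ≤ M(σ₀ − x) on [0,σ₀]. Then for every ε > 0 there exists η > 0, depending only on ε, p, s₀, sup_{t∈(0,T]} u(t,0), T, and M, such that if |s₀ − σ₀| + ‖φ − ψ‖_{L^∞} ≤ η (with φ, ψ extended by zero outside their intervals), then sup_{t∈(0,T]} |s(t) − σ(t)| + sup_{t∈(0,T]} ‖u(t) − v(t)‖_{L^∞} ≤ ε (with u(t,·), v(t,·) extended by zero). -/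

import Mathlib

open Set MeasureTheory Filter Topology Real
open scoped ENNReal

noncomputable section

/-- `(s₀, φ)` belongs to the class `W`: `s₀ ∈ (0,∞)`, `φ` is Lipschitz on `[0,s₀]`,
not identically zero, nonnegative there, and vanishes at `s₀`. -/
def memW (s₀ : ℝ) (φ : ℝ → ℝ) : Prop :=
  0 < s₀ ∧ (∃ K : NNReal, LipschitzOnWith K φ (Icc 0 s₀)) ∧
    (∃ x ∈ Icc 0 s₀, φ x ≠ 0) ∧ (∀ x ∈ Icc 0 s₀, 0 ≤ φ x) ∧ φ s₀ = 0

/-- `(s,u)` is a solution of the one-phase Stefan problem (P) on `(0,T]` (finite `T`)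
with exponent `p` and initial data `(s₀,φ)`. -/
structure IsSolOn (p s₀ : ℝ) (φ : ℝ → ℝ) (T : ℝ) (s : ℝ → ℝ) (u : ℝ → ℝ → ℝ) : Prop where
  T_pos : 0 < T
  s_cont : ContinuousOn s (Icc 0 T)
  s_diff : ∀ t ∈ Ioc 0 T, DifferentiableAt ℝ s t
  s_deriv_cont : ContinuousOn (deriv s) (Ioc 0 T)
  s_pos : ∀ t ∈ Icc 0 T, 0 < s t
  ut_diff : ∀ t ∈ Ioc 0 T, ∀ x ∈ Ioo 0 (s t), DifferentiableAt ℝ (fun τ => u τ x) t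
  ux_diff : ∀ t ∈ Ioc 0 T, ∀ x ∈ Ioo 0 (s t), DifferentiableAt ℝ (u t) x
  uxx_diff : ∀ t ∈ Ioc 0 T, ∀ x ∈ Ioo 0 (s t), DifferentiableAt ℝ (deriv (u t)) x
  ut_cont : ContinuousOn (fun q : ℝ × ℝ => deriv (fun τ => u τ q.2) q.1)
      {q : ℝ × ℝ | q.1 ∈ Ioc 0 T ∧ q.2 ∈ Ioo 0 (s q.1)}
  uxx_cont : ContinuousOn (fun q : ℝ × ℝ => deriv (deriv (u q.1)) q.2)
      {q : ℝ × ℝ | q.1 ∈ Ioc 0 T ∧ q.2 ∈ Ioo 0 (s q.1)}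
  ux_cont : ContinuousOn (fun q : ℝ × ℝ => deriv (u q.1) q.2)
      {q : ℝ × ℝ | q.1 ∈ Ioc 0 T ∧ q.2 ∈ Icc 0 (s q.1)}
  u_cont : ContinuousOn (fun q : ℝ × ℝ => u q.1 q.2)
      {q : ℝ × ℝ | q.1 ∈ Icc 0 T ∧ q.2 ∈ Icc 0 (s q.1)}
  u_nonneg : ∀ t ∈ Icc 0 T, ∀ x ∈ Icc 0 (s t), 0 ≤ u t x
  heat : ∀ t ∈ Ioc 0 T, ∀ x ∈ Ioo 0 (s t),
      deriv (fun τ => u τ x) t = deriv (deriv (u t)) x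
  bc_zero : ∀ t ∈ Ioc 0 T, -deriv (u t) 0 = u t 0 ^ p
  bc_free : ∀ t ∈ Ioc 0 T, u t (s t) = 0
  stefan : ∀ t ∈ Ioc 0 T, deriv s t = -deriv (u t) (s t)
  init : ∀ x ∈ Icc 0 s₀, u 0 x = φ x
  init_s : s 0 = s₀

/-- `(s,u)` is a global-in-time solution of problem (P). -/
def IsGlobalSol (p s₀ : ℝ) (φ : ℝ → ℝ) (s : ℝ → ℝ) (u : ℝ → ℝ → ℝ) : Prop :=
  ∀ T : ℝ, 0 < T → IsSolOn p s₀ φ T s u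

/-- `Tm ∈ (0,∞]` is the maximal existence time of the solution `(s,u)` of (P) with
initial data `(s₀,φ)`: the solution exists on `(0,T]` for every `T < Tm`, and for
`T > Tm` problem (P) admits no solution on `(0,T]`. -/
def IsMaxSol (p s₀ : ℝ) (φ : ℝ → ℝ) (Tm : ℝ≥0∞) (s : ℝ → ℝ) (u : ℝ → ℝ → ℝ) : Prop :=
  0 < Tm ∧
    (∀ T : ℝ, 0 < T → ENNReal.ofReal T < Tm → IsSolOn p s₀ φ T s u) ∧
    (∀ T : ℝ, Tm < ENNReal.ofReal T → ¬∃ σ v, IsSolOn p s₀ φ T σ v)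

/-- The sup norm `‖u(t)‖_{L^∞(0,s(t))}`. -/
def supNorm (s : ℝ → ℝ) (u : ℝ → ℝ → ℝ) (t : ℝ) : ℝ :=
  sSup (u t '' Ioo 0 (s t))

/-- The `L¹` norm `‖u(t)‖_{L¹(0,s(t))}` of the nonnegative function `u(t,·)`. -/
def L1Norm (s : ℝ → ℝ) (u : ℝ → ℝ → ℝ) (t : ℝ) : ℝ :=
  ∫ x in (0:ℝ)..(s t), u t x

/-- The energy `E(s(t),u(t))`. -/
def energy (p : ℝ) (s : ℝ → ℝ) (u : ℝ → ℝ → ℝ) (t : ℝ) : ℝ :=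
  1 / 2 * (∫ x in (0:ℝ)..(s t), (deriv (u t) x) ^ 2) - u t 0 ^ (p + 1) / (p + 1)

/-- The extension of a function on `[0,a]` by zero outside `[0,a]`. -/
def extZero (a : ℝ) (f : ℝ → ℝ) : ℝ → ℝ := fun x => if x ∈ Icc 0 a then f x else 0

theorem aux_right_deriv_nonpos {f : ℝ → ℝ} {d a : ℝ} (h : HasDerivWithinAt f d (Ici a) a)
    (hm : ∀ᶠ x in 𝓝[>] a, f x ≤ f a) : d ≤ 0 := by
  rw [hasDerivWithinAt_iff_tendsto_slope, Ici_sdiff_left] at h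
  refine le_of_tendsto h ?_
  filter_upwards [hm, self_mem_nhdsWithin] with x hx hx2
  rw [slope_def_field]
  exact div_nonpos_of_nonpos_of_nonneg (by linarith) (by rw [mem_Ioi] at hx2; linarith)

theorem aux_left_deriv_nonneg {f : ℝ → ℝ} {d a : ℝ} (h : HasDerivWithinAt f d (Iic a) a)
    (hm : ∀ᶠ x in 𝓝[<] a, f x ≤ f a) : 0 ≤ d := by
  rw [hasDerivWithinAt_iff_tendsto_slope, Iic_sdiff_right] at h
  refine ge_of_tendsto h ?_
  filter_upwards [hm, self_mem_nhdsWithin] with x hx hx2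
  rw [slope_def_field]
  exact div_nonneg_of_nonpos (by linarith) (by rw [mem_Iio] at hx2; linarith)

theorem aux_second_deriv {f fx : ℝ → ℝ} {b x : ℝ} (h1 : ∀ᶠ y in 𝓝 x, HasDerivAt f (fx y) y)
    (h2 : HasDerivAt fx b x) (hm : ∀ᶠ y in 𝓝 x, f y ≤ f x) : b ≤ 0 := by
  by_contra hb
  push Not at hb
  have hfx : fx x = 0 := IsLocalMax.hasDerivAt_eq_zero hm h1.self_of_nhds
  -- fx > 0 to the right
  have h3 : ∀ᶠ y in 𝓝[>] x, 0 < fx y := by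
    have := h2.hasDerivWithinAt (s := Ici x)
    rw [hasDerivWithinAt_iff_tendsto_slope, Ici_sdiff_left] at this
    filter_upwards [this.eventually (lt_mem_nhds hb), self_mem_nhdsWithin] with y hy hy2
    rw [slope_def_field, hfx, sub_zero] at hy
    rw [mem_Ioi] at hy2
    have h4 : 0 < y - x := by linarith
    have := mul_pos hy h4
    rwa [div_mul_cancel₀ _ h4.ne'] at this
  have h5 := h3.and ((h1.filter_mono nhdsWithin_le_nhds).and (hm.filter_mono nhdsWithin_le_nhds))
  rw [eventually_iff, mem_nhdsGT_iff_exists_Ioo_subset] at h5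
  obtain ⟨z, hz, hz2⟩ := h5
  rw [mem_Ioi] at hz
  set y := (x + z) / 2 with hy
  have hxy : x < y := by rw [hy]; linarith
  have hyz : y < z := by rw [hy]; linarith
  have hcont : ContinuousOn f (Icc x y) := by
    intro w hw
    rcases eq_or_lt_of_le hw.1 with h | h
    · rw [← h]; exact h1.self_of_nhds.continuousAt.continuousWithinAt
    · exact (hz2 ⟨h, by linarith [hw.2]⟩).2.1.continuousAt.continuousWithinAt
  obtain ⟨w, hw, hw2⟩ := exists_hasDerivAt_eq_slope f fx hxy hcont
    (fun w hw => (hz2 ⟨hw.1, hw.2.trans hyz⟩).2.1)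
  have := (hz2 ⟨hw.1, hw.2.trans hyz⟩ : _).1
  have h6 := (hz2 ⟨hxy, hyz⟩ : _).2.2
  rw [hw2] at this
  have h7 : (f y - f x) / (y - x) ≤ 0 :=
    div_nonpos_of_nonpos_of_nonneg (by linarith) (by linarith)
  linarith

theorem hmp (T : ℝ) (hT : 0 ≤ T) (m : ℝ → ℝ) (hm : ContinuousOn m (Icc 0 T))
    (hmpos : ∀ t ∈ Icc 0 T, 0 < m t) (k : ℝ) (f fx : ℝ → ℝ → ℝ)
    (hf : ContinuousOn (fun q : ℝ × ℝ => f q.1 q.2)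
      {q : ℝ × ℝ | q.1 ∈ Icc 0 T ∧ q.2 ∈ Icc 0 (m q.1)})
    (hinit : ∀ x ∈ Icc 0 (m 0), f 0 x ≤ 0)
    (hfx : ∀ t ∈ Ioc 0 T, ∀ x ∈ Ioo 0 (m t), HasDerivAt (f t) (fx t x) x)
    (hint : ∀ t ∈ Ioc 0 T, ∀ x ∈ Ioo 0 (m t), ∃ a b, HasDerivAt (fx t) b x ∧
      HasDerivWithinAt (fun τ => f τ x) a (Iic t) t ∧ a ≤ b)
    (h0 : ∀ t ∈ Ioc 0 T, f t 0 ≤ 0 ∨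
      (∃ a ≤ 0, HasDerivWithinAt (fun τ => f τ 0) a (Iic t) t) ∨
      ∃ d > k * f t 0, HasDerivWithinAt (f t) d (Ici 0) 0)
    (hl : ∀ t ∈ Ioc 0 T, f t (m t) ≤ 0 ∨
      ∃ d < k * f t (m t), HasDerivWithinAt (f t) d (Iic (m t)) (m t)) :
    ∀ t ∈ Icc 0 T, ∀ x ∈ Icc 0 (m t), f t x ≤ 0 := by
  set Ω : Set (ℝ × ℝ) := {q : ℝ × ℝ | q.1 ∈ Icc 0 T ∧ q.2 ∈ Icc 0 (m q.1)} with hΩ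
  have hΩc : IsCompact Ω := by
    have h1 : Ω = (fun q : ℝ × ℝ => (q.1, q.2 * m q.1)) '' (Icc 0 T ×ˢ Icc 0 1) := by
      ext ⟨t, x⟩
      constructor
      · rintro ⟨h1, h2⟩
        simp only at h1 h2
        have := hmpos t h1
        refine ⟨(t, x / m t), ⟨h1, div_nonneg h2.1 this.le, ?_⟩, ?_⟩
        · simp only; rw [div_le_one this]; exact h2.2
        · simp only; rw [div_mul_cancel₀ _ this.ne']
      · rintro ⟨⟨t', z⟩, ⟨h1, h2⟩, h3⟩
        simp only [Prod.mk.injEq] at h1 h2 h3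
        obtain ⟨rfl, rfl⟩ := h3
        have := hmpos t' h1
        exact ⟨h1, mul_nonneg h2.1 this.le, mul_le_of_le_one_left this.le h2.2⟩
    rw [h1]
    refine (isCompact_Icc.prod isCompact_Icc).image_of_continuousOn ?_
    refine continuousOn_fst.prodMk (continuousOn_snd.mul ?_)
    exact hm.comp continuousOn_fst (fun q hq => hq.1)
  have hne : Ω.Nonempty := ⟨(0, 0), ⟨le_rfl, hT⟩, le_rfl, (hmpos 0 ⟨le_rfl, hT⟩).le⟩
  set Λ := k ^ 2 + 1 with hΛ
  obtain ⟨⟨t, x⟩, ⟨ht, hx⟩, hmax⟩ := hΩc.exists_isMaxOn hne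
    (f := fun q : ℝ × ℝ => f q.1 q.2 * exp (-(Λ * q.1 + k * q.2)))
    (hf.mul (by fun_prop))
  simp only at ht hx
  set E := f t x * exp (-(Λ * t + k * x)) with hE
  have hbd : ∀ t' ∈ Icc 0 T, ∀ x' ∈ Icc 0 (m t'), f t' x' ≤ E * exp (Λ * t' + k * x') := by
    intro t' ht' x' hx'
    have h1 : f t' x' * exp (-(Λ * t' + k * x')) ≤ E := hmax (show (t', x') ∈ Ω from ⟨ht', hx'⟩)
    have h2 := mul_le_mul_of_nonneg_right h1 (exp_pos (Λ * t' + k * x')).le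
    rwa [mul_assoc, ← exp_add, neg_add_cancel, exp_zero, mul_one] at h2
  have heq : f t x = E * exp (Λ * t + k * x) := by
    rw [hE, mul_assoc, ← exp_add, neg_add_cancel, exp_zero, mul_one]
  suffices hE0 : E ≤ 0 by
    intro t' ht' x' hx'
    exact (hbd t' ht' x' hx').trans (mul_nonpos_of_nonpos_of_nonneg hE0 (exp_pos _).le)
  by_contra hEpos
  push Not at hEpos
  set e := exp (Λ * t + k * x) with he
  have hepos : 0 < e := exp_pos _
  have hfpos : 0 < f t x := by rw [heq]; positivity
  have htpos : 0 < t := by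
    rcases eq_or_lt_of_le ht.1 with h | h
    · exfalso
      subst h
      linarith [hinit x hx]
    · exact h
  have ht' : t ∈ Ioc 0 T := ⟨htpos, ht.2⟩
  -- derivatives of the barrier
  have hbt : HasDerivAt (fun τ => E * exp (Λ * τ + k * x)) (E * (e * Λ)) t := by
    have : HasDerivAt (fun τ => Λ * τ + k * x) Λ t := by
      simpa using ((hasDerivAt_id t).const_mul Λ).add_const (k * x)
    exact (this.exp).const_mul E
  have hbx : ∀ y, HasDerivAt (fun y => E * exp (Λ * t + k * y)) (E * (exp (Λ * t + k * y) * k)) y := by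
    intro y
    have : HasDerivAt (fun y => Λ * t + k * y) k y := by
      simpa using ((hasDerivAt_id y).const_mul k).const_add (Λ * t)
    exact (this.exp).const_mul E
  have hbxx : HasDerivAt (fun y => E * (exp (Λ * t + k * y) * k)) (E * (e * k * k)) x := by
    have : HasDerivAt (fun y => Λ * t + k * y) k x := by
      simpa using ((hasDerivAt_id x).const_mul k).const_add (Λ * t)
    exact ((this.exp).mul_const k).const_mul E
  -- left in time
  have hleft : x < m t → ∀ a, HasDerivWithinAt (fun τ => f τ x) a (Iic t) t → E * (e * Λ) ≤ a := by
    intro hxm a ha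
    have h1 := aux_left_deriv_nonneg (ha.sub hbt.hasDerivWithinAt) ?_
    · linarith
    have h2 : ∀ᶠ τ in 𝓝[<] t, x < m τ := by
      have hc : ContinuousWithinAt m (Icc 0 T) t := hm t ht
      have : ∀ᶠ τ in 𝓝[Icc 0 T] t, x < m τ := hc.eventually (lt_mem_nhds hxm)
      refine Filter.Eventually.filter_mono ?_ this
      rw [nhdsWithin_le_iff]
      filter_upwards [Ioo_mem_nhdsLT htpos] with τ hτ
      exact ⟨hτ.1.le, hτ.2.le.trans ht.2⟩
    filter_upwards [h2, Ioo_mem_nhdsLT htpos] with τ hτ hτ2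
    have h3 := hbd τ ⟨hτ2.1.le, hτ2.2.le.trans ht.2⟩ x ⟨hx.1, hτ.le⟩
    simp only [Pi.sub_apply]
    rw [heq]
    linarith
  have hΛpos : 0 < Λ := by positivity
  rcases eq_or_lt_of_le hx.1 with hx0 | hx0
  · -- x = 0
    subst hx0
    have hxm : 0 < m t := hmpos t ht
    rcases h0 t ht' with h | ⟨a, ha, h⟩ | ⟨d, hd, h⟩
    · linarith
    · have := hleft hxm a h
      have h2 : 0 < E * (e * Λ) := by positivity
      linarith
    · have h1 := aux_right_deriv_nonpos (h.sub (hbx 0).hasDerivWithinAt) ?_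
      · rw [← he] at h1
        rw [heq] at hd
        nlinarith
      · filter_upwards [Ioo_mem_nhdsGT hxm] with y hy
        have h3 := hbd t ht y ⟨hy.1.le, hy.2.le⟩
        simp only [Pi.sub_apply]
        rw [heq]
        linarith
  rcases eq_or_lt_of_le hx.2 with hxm | hxm
  · -- x = m t
    rcases hl t ht' with h | ⟨d, hd, h⟩
    · rw [← hxm] at h; linarith
    · rw [← hxm] at h hd
      have h1 := aux_left_deriv_nonneg (h.sub (hbx x).hasDerivWithinAt) ?_
      · rw [← he] at h1
        rw [heq] at hd
        nlinarith
      · filter_upwards [Ioo_mem_nhdsLT hx0] with y hy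
        have h3 := hbd t ht y ⟨hy.1.le, hy.2.le.trans hx.2⟩
        simp only [Pi.sub_apply]
        rw [heq]
        linarith
  · obtain ⟨a, b, hb, ha, hab⟩ := hint t ht' x ⟨hx0, hxm⟩
    have h1 := hleft hxm a ha
    have hnh : ∀ᶠ y in 𝓝 x, y ∈ Ioo 0 (m t) := Ioo_mem_nhds hx0 hxm
    have h2 := aux_second_deriv (f := fun y => f t y - E * exp (Λ * t + k * y))
      (fx := fun y => fx t y - E * (exp (Λ * t + k * y) * k)) (x := x)
      (hnh.mono fun y hy => (hfx t ht' y hy).sub (hbx y)) (hb.sub hbxx)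
      (hnh.mono fun y hy => by
        have h3 := hbd t ht y ⟨hy.1.le, hy.2.le⟩
        rw [← he, heq]
        linarith)
    have h3 : E * (e * Λ) = E * (e * k * k) + E * e := by rw [hΛ]; ring
    have h4 : 0 < E * e := by positivity
    linarith
theorem sol_restrict {p s₀ T T' : ℝ} {φ s : ℝ → ℝ} {u : ℝ → ℝ → ℝ}
    (h : IsSolOn p s₀ φ T s u) (h0 : 0 < T') (hT : T' ≤ T) : IsSolOn p s₀ φ T' s u where
  T_pos := h0
  s_cont := h.s_cont.mono (Icc_subset_Icc_right hT)
  s_diff := fun t ht => h.s_diff t ⟨ht.1, ht.2.trans hT⟩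
  s_deriv_cont := h.s_deriv_cont.mono (Ioc_subset_Ioc_right hT)
  s_pos := fun t ht => h.s_pos t ⟨ht.1, ht.2.trans hT⟩
  ut_diff := fun t ht => h.ut_diff t ⟨ht.1, ht.2.trans hT⟩
  ux_diff := fun t ht => h.ux_diff t ⟨ht.1, ht.2.trans hT⟩
  uxx_diff := fun t ht => h.uxx_diff t ⟨ht.1, ht.2.trans hT⟩
  ut_cont := h.ut_cont.mono (fun _ hq => ⟨⟨hq.1.1, hq.1.2.trans hT⟩, hq.2⟩)
  uxx_cont := h.uxx_cont.mono (fun _ hq => ⟨⟨hq.1.1, hq.1.2.trans hT⟩, hq.2⟩)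
  ux_cont := h.ux_cont.mono (fun _ hq => ⟨⟨hq.1.1, hq.1.2.trans hT⟩, hq.2⟩)
  u_cont := h.u_cont.mono (fun _ hq => ⟨⟨hq.1.1, hq.1.2.trans hT⟩, hq.2⟩)
  u_nonneg := fun t ht => h.u_nonneg t ⟨ht.1, ht.2.trans hT⟩
  heat := fun t ht => h.heat t ⟨ht.1, ht.2.trans hT⟩
  bc_zero := fun t ht => h.bc_zero t ⟨ht.1, ht.2.trans hT⟩
  bc_free := fun t ht => h.bc_free t ⟨ht.1, ht.2.trans hT⟩
  stefan := fun t ht => h.stefan t ⟨ht.1, ht.2.trans hT⟩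
  init := h.init
  init_s := h.init_s

section sol
variable {p s₀ T : ℝ} {φ s : ℝ → ℝ} {u : ℝ → ℝ → ℝ}

theorem sol_ucont_x (h : IsSolOn p s₀ φ T s u) {t : ℝ} (ht : t ∈ Icc 0 T) :
    ContinuousOn (u t) (Icc 0 (s t)) :=
  h.u_cont.comp (f := fun x => ((t, x) : ℝ × ℝ)) (by fun_prop) (fun _ hx => ⟨ht, hx⟩)

theorem sol_uxcont_x (h : IsSolOn p s₀ φ T s u) {t : ℝ} (ht : t ∈ Ioc 0 T) :
    ContinuousOn (deriv (u t)) (Icc 0 (s t)) :=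
  h.ux_cont.comp (f := fun x => ((t, x) : ℝ × ℝ)) (by fun_prop) (fun _ hx => ⟨ht, hx⟩)

theorem sol_ux_right (h : IsSolOn p s₀ φ T s u) {t : ℝ} (ht : t ∈ Ioc 0 T) :
    HasDerivWithinAt (u t) (deriv (u t) 0) (Ici 0) 0 := by
  have hsp := h.s_pos t ⟨ht.1.le, ht.2⟩
  have h0 : (0:ℝ) ∈ Icc 0 (s t) := ⟨le_rfl, hsp.le⟩
  have hle : 𝓝[>] (0:ℝ) ≤ 𝓝[Icc 0 (s t)] 0 := by
    rw [nhdsWithin_le_iff]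
    filter_upwards [Ioo_mem_nhdsGT hsp] with x hx using ⟨hx.1.le, hx.2.le⟩
  refine hasDerivWithinAt_Ici_of_tendsto_deriv (s := Ioo 0 (s t))
    (fun x hx => (h.ux_diff t ht x hx).differentiableWithinAt) ?_ (Ioo_mem_nhdsGT hsp) ?_
  · exact (sol_ucont_x h ⟨ht.1.le, ht.2⟩ 0 h0).mono Ioo_subset_Icc_self
  · exact (sol_uxcont_x h ht 0 h0).tendsto.mono_left hle

theorem sol_ux_left (h : IsSolOn p s₀ φ T s u) {t : ℝ} (ht : t ∈ Ioc 0 T) :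
    HasDerivWithinAt (u t) (deriv (u t) (s t)) (Iic (s t)) (s t) := by
  have hsp := h.s_pos t ⟨ht.1.le, ht.2⟩
  have h0 : s t ∈ Icc 0 (s t) := ⟨hsp.le, le_rfl⟩
  have hle : 𝓝[<] (s t) ≤ 𝓝[Icc 0 (s t)] (s t) := by
    rw [nhdsWithin_le_iff]
    filter_upwards [Ioo_mem_nhdsLT hsp] with x hx using ⟨hx.1.le, hx.2.le⟩
  refine hasDerivWithinAt_Iic_of_tendsto_deriv (s := Ioo 0 (s t))
    (fun x hx => (h.ux_diff t ht x hx).differentiableWithinAt) ?_ (Ioo_mem_nhdsLT hsp) ?_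
  · exact (sol_ucont_x h ⟨ht.1.le, ht.2⟩ _ h0).mono Ioo_subset_Icc_self
  · exact (sol_uxcont_x h ht _ h0).tendsto.mono_left hle

theorem sol_s_deriv_nonneg (h : IsSolOn p s₀ φ T s u) {t : ℝ} (ht : t ∈ Ioc 0 T) :
    0 ≤ deriv s t := by
  have hsp := h.s_pos t ⟨ht.1.le, ht.2⟩
  have := aux_left_deriv_nonneg (sol_ux_left h ht).neg ?_
  · rwa [h.stefan t ht]
  · filter_upwards [Ioo_mem_nhdsLT hsp] with x hx
    have := h.u_nonneg t ⟨ht.1.le, ht.2⟩ x ⟨hx.1.le, hx.2.le⟩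
    simp only [Pi.neg_apply]
    rw [h.bc_free t ht]
    linarith

theorem sol_s_ge (h : IsSolOn p s₀ φ T s u) {t : ℝ} (ht : t ∈ Icc 0 T) : s₀ ≤ s t := by
  have hmono : MonotoneOn s (Icc 0 T) := by
    refine monotoneOn_of_deriv_nonneg (convex_Icc 0 T) h.s_cont ?_ ?_
    · intro t ht
      rw [interior_Icc] at ht
      exact (h.s_diff t ⟨ht.1, ht.2.le⟩).differentiableWithinAt
    · intro t ht
      rw [interior_Icc] at ht
      exact sol_s_deriv_nonneg h ⟨ht.1, ht.2.le⟩
  rw [← h.init_s]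
  exact hmono ⟨le_rfl, h.T_pos.le⟩ ht ht.1

theorem sol_lin (h : IsSolOn p s₀ φ T s u) {K M C : ℝ} (hC : 0 ≤ C) (hMC : M ≤ C)
    (hKC : K ≤ C * s₀)
    (hK : ∀ t ∈ Ioc 0 T, u t 0 ≤ K) (hφ : ∀ x ∈ Icc 0 s₀, φ x ≤ M * (s₀ - x)) :
    ∀ t ∈ Icc 0 T, ∀ x ∈ Icc 0 (s t), u t x ≤ C * (s t - x) := by
  have key := hmp T h.T_pos.le s h.s_cont h.s_pos 0 (fun t x => u t x - C * (s t - x))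
    (fun t x => deriv (u t) x + C) ?_ ?_ ?_ ?_ ?_ ?_
  · intro t ht x hx
    linarith [key t ht x hx]
  · refine h.u_cont.sub (continuousOn_const.mul (ContinuousOn.sub ?_ continuousOn_snd))
    exact h.s_cont.comp continuousOn_fst (fun q hq => hq.1)
  · intro x hx
    rw [h.init_s] at hx ⊢
    rw [h.init x hx]
    have := hφ x hx
    have : M * (s₀ - x) ≤ C * (s₀ - x) := mul_le_mul_of_nonneg_right hMC (by linarith [hx.2])
    linarith
  · intro t ht x hx
    have h1 := (h.ux_diff t ht x hx).hasDerivAt.sub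
      (((hasDerivAt_id x).const_sub (s t)).const_mul C)
    exact h1.congr_deriv (by ring)
  · intro t ht x hx
    refine ⟨deriv (fun τ => u τ x) t - C * deriv s t, deriv (deriv (u t)) x, ?_, ?_, ?_⟩
    · exact (h.uxx_diff t ht x hx).hasDerivAt.add_const C
    · exact ((h.ut_diff t ht x hx).hasDerivAt.sub
        (((h.s_diff t ht).hasDerivAt.sub_const x).const_mul C)).hasDerivWithinAt
    · rw [h.heat t ht x hx]
      have := mul_nonneg hC (sol_s_deriv_nonneg h ht)
      linarith
  · intro t ht
    left
    have h1 := hK t ht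
    have h2 := mul_le_mul_of_nonneg_left (sol_s_ge h (t := t) ⟨ht.1.le, ht.2⟩) hC
    simp only [sub_zero]
    linarith
  · intro t ht
    left
    rw [h.bc_free t ht]
    simp

/-- global continuous extension -/
def Uext (T : ℝ) (s : ℝ → ℝ) (u : ℝ → ℝ → ℝ) (t y : ℝ) : ℝ :=
  u (max 0 (min t T)) (max 0 (min y (s (max 0 (min t T)))))

theorem Uext_cont (h : IsSolOn p s₀ φ T s u) :
    Continuous (Function.uncurry (Uext T s u)) := by
  have hmem : ∀ t, max 0 (min t T) ∈ Icc 0 T := fun t =>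
    ⟨le_max_left _ _, max_le h.T_pos.le (min_le_right _ _)⟩
  have hc : Continuous (fun t => s (max 0 (min t T))) :=
    h.s_cont.comp_continuous (by fun_prop) hmem
  refine h.u_cont.comp_continuous (f := fun q : ℝ × ℝ =>
    ((max 0 (min q.1 T), max 0 (min q.2 (s (max 0 (min q.1 T))))) : ℝ × ℝ)) ?_ ?_
  · have : Continuous (fun q : ℝ × ℝ => s (max 0 (min q.1 T))) := hc.comp continuous_fst
    exact (by fun_prop : Continuous fun q : ℝ × ℝ => max 0 (min q.1 T)).prodMk
      (continuous_const.max (continuous_snd.min this))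
  · intro q
    exact ⟨hmem _, le_max_left _ _, max_le (h.s_pos _ (hmem _)).le (min_le_right _ _)⟩

theorem Uext_eq {t x : ℝ} (ht : t ∈ Icc 0 T) (hx : x ∈ Icc 0 (s t)) :
    Uext T s u t x = u t x := by
  unfold Uext
  rw [min_eq_left ht.2, max_eq_right ht.1, min_eq_left hx.2, max_eq_right hx.1]

def Pf (T : ℝ) (s : ℝ → ℝ) (u : ℝ → ℝ → ℝ) (t x : ℝ) : ℝ :=
  (∫ y in x..s t, Uext T s u t y) + s t - x

theorem Uext_ii (h : IsSolOn p s₀ φ T s u) (t a b : ℝ) :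
    IntervalIntegrable (Uext T s u t) volume a b :=
  Continuous.intervalIntegrable ((Uext_cont h).comp (by fun_prop : Continuous fun y : ℝ => (t, y))) a b

theorem Pf_cont (h : IsSolOn p s₀ φ T s u) :
    ContinuousOn (fun q : ℝ × ℝ => Pf T s u q.1 q.2) {q : ℝ × ℝ | q.1 ∈ Icc 0 T} := by
  have hs : ContinuousOn (fun q : ℝ × ℝ => s q.1) {q : ℝ × ℝ | q.1 ∈ Icc 0 T} :=
    h.s_cont.comp continuousOn_fst (fun q hq => hq)
  have hp := intervalIntegral.continuous_parametric_primitive_of_continuous (μ := volume)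
    (a₀ := 0) (Uext_cont h)
  have h1 : ContinuousOn (fun q : ℝ × ℝ => ∫ y in (0:ℝ)..s q.1, Uext T s u q.1 y)
      {q : ℝ × ℝ | q.1 ∈ Icc 0 T} :=
    hp.comp_continuousOn (f := fun q : ℝ × ℝ => ((q.1, s q.1) : ℝ × ℝ)) (continuousOn_fst.prodMk hs)
  have h2 : (fun q : ℝ × ℝ => Pf T s u q.1 q.2) = fun q : ℝ × ℝ =>
      (∫ y in (0:ℝ)..s q.1, Uext T s u q.1 y) - (∫ y in (0:ℝ)..q.2, Uext T s u q.1 y)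
        + s q.1 - q.2 := by
    funext q
    unfold Pf
    rw [intervalIntegral.integral_interval_sub_left (Uext_ii h _ _ _) (Uext_ii h _ _ _)]
  rw [h2]
  exact ((h1.sub hp.continuousOn).add hs).sub continuousOn_snd

theorem Pf_deriv_x (h : IsSolOn p s₀ φ T s u) (t x : ℝ) :
    HasDerivAt (Pf T s u t) (-Uext T s u t x - 1) x := by
  have hc : Continuous (Uext T s u t) :=
    (Uext_cont h).comp (by fun_prop : Continuous fun y : ℝ => (t, y))
  have h1 := intervalIntegral.integral_hasDerivAt_left (Uext_ii h t x (s t))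
    hc.stronglyMeasurable.stronglyMeasurableAtFilter hc.continuousAt
  exact (h1.add_const (s t)).sub (hasDerivAt_id x)

theorem rect_mvt (h : IsSolOn p s₀ φ T s u) {t1 t0 δ a : ℝ} (ht1 : 0 < t1) (ht : t1 < t0)
    (ht0 : t0 ≤ T) (hδ : 0 < δ) (hδa : δ ≤ a) (hr : ∀ τ ∈ Icc t1 t0, a < s τ) :
    ∃ τ ∈ Ioo t1 t0, (∫ y in δ..a, Uext T s u t0 y) - (∫ y in δ..a, Uext T s u t1 y) =
      (t0 - t1) * (deriv (u τ) a - deriv (u τ) δ) := by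
  have hIcc : ∀ τ ∈ Icc t1 t0, τ ∈ Ioc 0 T := fun τ hτ => ⟨ht1.trans_le hτ.1, hτ.2.trans ht0⟩
  have hx : ∀ τ ∈ Icc t1 t0, ∀ y ∈ Icc δ a, y ∈ Ioo 0 (s τ) := fun τ hτ y hy =>
    ⟨hδ.trans_le hy.1, hy.2.trans_lt (hr τ hτ)⟩
  have hd : ∀ τ ∈ Ioo t1 t0, HasDerivAt (fun τ => ∫ y in δ..a, Uext T s u τ y)
      (deriv (u τ) a - deriv (u τ) δ) τ := by
    intro τ hτ
    have hτ' : τ ∈ Icc t1 t0 := ⟨hτ.1.le, hτ.2.le⟩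
    have hcont : ContinuousOn (fun q : ℝ × ℝ => deriv (fun τ => u τ q.2) q.1)
        (Icc t1 t0 ×ˢ Icc δ a) :=
      h.ut_cont.mono (fun q hq => ⟨hIcc _ hq.1, hx _ hq.1 _ hq.2⟩)
    obtain ⟨B, hB⟩ := (isCompact_Icc.prod isCompact_Icc).exists_bound_of_continuousOn hcont
    have hcx : ContinuousOn (fun y => deriv (fun τ => u τ y) τ) (Icc δ a) :=
      hcont.comp (f := fun y => ((τ, y) : ℝ × ℝ)) (by fun_prop) (fun y hy => ⟨hτ', hy⟩)
    have hsub : uIoc δ a ⊆ Icc δ a := by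
      rw [uIoc_of_le hδa]; exact Ioc_subset_Icc_self
    have key := intervalIntegral.hasDerivAt_integral_of_dominated_loc_of_deriv_le
      (μ := volume) (a := δ) (b := a) (F := Uext T s u)
      (F' := fun τ y => deriv (fun τ => u τ y) τ) (x₀ := τ) (s := Ioo t1 t0)
      (bound := fun _ => B) (Ioo_mem_nhds hτ.1 hτ.2)
      (Eventually.of_forall fun t =>
        (((Uext_cont h).comp (by fun_prop : Continuous fun y : ℝ => (t, y)))).aestronglyMeasurable)
      (Uext_ii h _ _ _)
      ((hcx.mono hsub).aestronglyMeasurable measurableSet_uIoc)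
      (Eventually.of_forall fun y hy t ht' =>
        hB (t, y) ⟨⟨ht'.1.le, ht'.2.le⟩, hsub hy⟩)
      intervalIntegrable_const
      (Eventually.of_forall fun y hy t ht' => by
        have h1 := (h.ut_diff t (hIcc t ⟨ht'.1.le, ht'.2.le⟩) y
          (hx t ⟨ht'.1.le, ht'.2.le⟩ y (hsub hy))).hasDerivAt
        refine h1.congr_of_eventuallyEq ?_
        filter_upwards [Ioo_mem_nhds ht'.1 ht'.2] with t'' ht''
        have h2 := hIcc t'' ⟨ht''.1.le, ht''.2.le⟩
        have h3 := hx t'' ⟨ht''.1.le, ht''.2.le⟩ y (hsub hy)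
        exact Uext_eq ⟨h2.1.le, h2.2⟩ ⟨h3.1.le, h3.2.le⟩)
    have heq : ∫ y in δ..a, deriv (fun τ => u τ y) τ = deriv (u τ) a - deriv (u τ) δ := by
      apply intervalIntegral.integral_eq_sub_of_hasDerivAt
      · intro y hy
        rw [uIcc_of_le hδa] at hy
        have h1 := hx τ hτ' y hy
        simp only [h.heat τ (hIcc τ hτ') y h1]
        exact (h.uxx_diff τ (hIcc τ hτ') y h1).hasDerivAt
      · exact key.1
    have := key.2
    rwa [heq] at this
  have hc : Continuous (fun τ => ∫ y in δ..a, Uext T s u τ y) :=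
    intervalIntegral.continuous_parametric_intervalIntegral_of_continuous' (Uext_cont h) δ a
  obtain ⟨τ, hτ, hτ2⟩ := exists_hasDerivAt_eq_slope _ _ ht hc.continuousOn hd
  refine ⟨τ, hτ, ?_⟩
  rw [hτ2]
  field_simp [(sub_pos.2 ht).ne']

theorem sol_Us (h : IsSolOn p s₀ φ T s u) {t : ℝ} (ht : t ∈ Ioc 0 T) :
    Uext T s u t (s t) = 0 := by
  rw [Uext_eq ⟨ht.1.le, ht.2⟩ ⟨(h.s_pos t ⟨ht.1.le, ht.2⟩).le, le_rfl⟩, h.bc_free t ht]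

theorem Pf_deriv_t (h : IsSolOn p s₀ φ T s u) {t0 x : ℝ} (ht0 : t0 ∈ Ioc 0 T)
    (hx : x ∈ Ico 0 (s t0)) :
    HasDerivWithinAt (fun τ => Pf T s u τ x) (-deriv (u t0) x) (Iic t0) t0 := by
  have hsp := h.s_pos t0 ⟨ht0.1.le, ht0.2⟩
  set c := deriv s t0 with hc
  have hs : HasDerivAt s c t0 := (h.s_diff t0 ht0).hasDerivAt
  have hst : deriv (u t0) (s t0) = -c := by rw [hc, h.stefan t0 ht0]; ring
  have hc0 : 0 ≤ c := sol_s_deriv_nonneg h ht0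
  set L := c + 1 with hL
  have hLpos : 0 < L := by linarith
  rw [← hasDerivWithinAt_sdiff_singleton, Iic_sdiff_right, hasDerivWithinAt_iff_isLittleO,
    Asymptotics.isLittleO_iff]
  intro ε' hε'
  obtain ⟨ε, hε, hεε⟩ : ∃ ε : ℝ, 0 < ε ∧ (3 + 5 * L) * ε ≤ ε' :=
    ⟨ε' / (3 + 5 * L), by positivity, by rw [mul_div_cancel₀]; positivity⟩
  -- continuity facts
  have hxI : x ∈ Icc 0 (s t0) := ⟨hx.1, hx.2.le⟩
  have h1 := Metric.continuousOn_iff.1 h.ux_cont (t0, s t0) ⟨ht0, hsp.le, le_rfl⟩ ε hε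
  have h2 := Metric.continuousOn_iff.1 h.ux_cont (t0, x) ⟨ht0, hxI⟩ ε hε
  have h3 := Metric.continuous_iff.1 (Uext_cont h) (t0, s t0) ε hε
  obtain ⟨r1, hr1, h1⟩ := h1
  obtain ⟨r2, hr2, h2⟩ := h2
  obtain ⟨r3, hr3, h3⟩ := h3
  have h4 := (Asymptotics.isLittleO_iff.1 (hasDerivAt_iff_isLittleO.1 hs)) (c := min ε 1) (by positivity)
  rw [Metric.eventually_nhds_iff] at h4
  obtain ⟨r4, hr4, h4⟩ := h4
  -- choose rho
  set r := min (min r1 r2) (min r3 r4) with hr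
  have hrpos : 0 < r := by simp only [hr]; positivity
  have hsx : 0 < s t0 - x := by linarith [hx.2]
  set ρ := min (min (t0) r) (min (r / (2 * L)) ((s t0 - x) / (2 * L))) with hρ
  have hρpos : 0 < ρ := by
    have := ht0.1
    simp only [hρ]; positivity
  have hρ1 : ρ ≤ t0 := (min_le_left _ _).trans (min_le_left _ _)
  have hρ2 : ρ ≤ r := (min_le_left _ _).trans (min_le_right _ _)
  have hρ3 : 2 * L * ρ ≤ r := by
    have : ρ ≤ r / (2 * L) := (min_le_right _ _).trans (min_le_left _ _)
    rw [le_div_iff₀ (by positivity)] at this; linarith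
  have hρ4 : 2 * L * ρ ≤ s t0 - x := by
    have : ρ ≤ (s t0 - x) / (2 * L) := (min_le_right _ _).trans (min_le_right _ _)
    rw [le_div_iff₀ (by positivity)] at this; linarith
  have hrr1 : r ≤ r1 := (min_le_left _ _).trans (min_le_left _ _)
  have hrr2 : r ≤ r2 := (min_le_left _ _).trans (min_le_right _ _)
  have hrr3 : r ≤ r3 := (min_le_right _ _).trans (min_le_left _ _)
  have hrr4 : r ≤ r4 := (min_le_right _ _).trans (min_le_right _ _)
  filter_upwards [Ioo_mem_nhdsLT (show t0 - ρ < t0 by linarith)] with t ht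
  set d := t0 - t with hd
  have hdpos : 0 < d := by linarith [ht.2]
  have hdρ : d < ρ := by linarith [ht.1]
  have htpos : 0 < t := by linarith
  have hLd : 2 * L * d < 2 * L * ρ := mul_lt_mul_of_pos_left hdρ (by positivity)
  -- control of s
  have hs1 : ∀ τ ∈ Icc t t0, |s τ - s t0 - (τ - t0) * c| ≤ min ε 1 * |τ - t0| := by
    intro τ hτ
    have := h4 (y := τ) (by rw [Real.dist_eq, abs_lt]; constructor <;> linarith [hτ.1, hτ.2])
    simpa [Real.norm_eq_abs] using this
  have hs2 : ∀ τ ∈ Icc t t0, |s τ - s t0| ≤ L * d := by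
    intro τ hτ
    have h5 := hs1 τ hτ
    have h6 : |τ - t0| ≤ d := by rw [abs_le]; constructor <;> linarith [hτ.1, hτ.2]
    have h7 : |s τ - s t0| ≤ |s τ - s t0 - (τ - t0) * c| + |(τ - t0) * c| := by
      have := abs_add_le (s τ - s t0 - (τ - t0) * c) ((τ - t0) * c)
      simpa using this
    rw [abs_mul, abs_of_nonneg hc0] at h7
    have h8 : min ε 1 * |τ - t0| ≤ 1 * d :=
      mul_le_mul (min_le_right _ _) h6 (abs_nonneg _) zero_le_one
    have h9 : |τ - t0| * c ≤ d * c := mul_le_mul_of_nonneg_right h6 hc0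
    rw [hL]; linarith
  set a := s t0 - 2 * L * d with ha
  have hxa : x < a := by linarith
  have hLdp : 0 < L * d := by positivity
  have hsa : ∀ τ ∈ Icc t t0, a < s τ := by
    intro τ hτ
    have := (abs_le.1 (hs2 τ hτ)).1
    rw [ha]; linarith
  have htI : t ∈ Icc t t0 := ⟨le_rfl, ht.2.le⟩
  have ht0I : t0 ∈ Icc t t0 := ⟨ht.2.le, le_rfl⟩
  -- first part
  have hA : |(∫ y in x..a, Uext T s u t0 y) - (∫ y in x..a, Uext T s u t y)
      - d * (-c - deriv (u t0) x)| ≤ 2 * ε * d := by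
    have hev : ∀ᶠ δ in 𝓝[>] x, |(∫ y in δ..a, Uext T s u t0 y) - (∫ y in δ..a, Uext T s u t y)
      - d * (-c - deriv (u t0) x)| ≤ 2 * ε * d := by
      filter_upwards [Ioo_mem_nhdsGT (show x < min a (x + r) from lt_min hxa (by linarith))] with δ hδ
      have hδa : δ < a := hδ.2.trans_le (min_le_left _ _)
      have hδr : δ < x + r := hδ.2.trans_le (min_le_right _ _)
      have hδ0 : 0 < δ := hx.1.trans_lt hδ.1
      obtain ⟨τ, hτ, hτ2⟩ := rect_mvt h htpos ht.2 ht0.2 hδ0 hδa.le hsa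
      have hτI : τ ∈ Icc t t0 := ⟨hτ.1.le, hτ.2.le⟩
      have hτT : τ ∈ Ioc 0 T := ⟨htpos.trans hτ.1, hτ.2.le.trans ht0.2⟩
      have hsτ := hsa τ hτI
      have hτd : |τ - t0| < r := by rw [abs_lt]; constructor <;> linarith [hτ.1, hτ.2]
      have e1 := h1 (τ, a) ⟨hτT, (hδ0.trans hδa).le, hsτ.le⟩ (by
        rw [Prod.dist_eq, max_lt_iff]
        refine ⟨by rw [Real.dist_eq]; linarith, ?_⟩
        rw [Real.dist_eq, abs_lt]; simp only; constructor <;> linarith)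
      have e2 := h2 (τ, δ) ⟨hτT, hδ0.le, (hδa.trans hsτ).le⟩ (by
        rw [Prod.dist_eq, max_lt_iff]
        refine ⟨by rw [Real.dist_eq]; linarith, ?_⟩
        rw [Real.dist_eq, abs_lt]; simp only; constructor <;> linarith [hδ.1])
      simp only [Real.dist_eq, hst] at e1 e2
      rw [hτ2, ← hd, ← mul_sub, abs_mul, abs_of_pos hdpos, mul_comm]
      refine mul_le_mul_of_nonneg_right ?_ hdpos.le
      rw [abs_lt] at e1 e2
      rw [abs_le]; constructor <;> linarith [e1.1, e1.2, e2.1, e2.2]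
    have hco : ∀ τ, Continuous (fun δ => ∫ y in δ..a, Uext T s u τ y) := by
      intro τ
      have : (fun δ => ∫ y in δ..a, Uext T s u τ y) = fun δ => - ∫ y in a..δ, Uext T s u τ y := by
        funext δ; rw [intervalIntegral.integral_symm]
      rw [this]
      exact (intervalIntegral.continuous_primitive (fun _ _ => Uext_ii h _ _ _) a).neg
    have hct : Continuous (fun δ => |(∫ y in δ..a, Uext T s u t0 y) - (∫ y in δ..a, Uext T s u t y)
      - d * (-c - deriv (u t0) x)|) := (((hco t0).sub (hco t)).sub continuous_const).abs
    exact le_of_tendsto ((hct.tendsto x).mono_left nhdsWithin_le_nhds) hev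
  -- second part
  have hB : ∀ τ ∈ Icc t t0, |∫ y in a..s τ, Uext T s u τ y| ≤ ε * (3 * L * d) := by
    intro τ hτ
    have h5 := abs_le.1 (hs2 τ hτ)
    have h6 := hsa τ hτ
    have h7 := intervalIntegral.norm_integral_le_of_norm_le_const (a := a) (b := s τ)
      (f := Uext T s u τ) (C := ε) (fun y hy => by
        rw [uIoc_of_le h6.le] at hy
        -- distance
        have hdy : dist (τ, y) (t0, s t0) < r3 := by
          rw [Prod.dist_eq, max_lt_iff]
          simp only [Real.dist_eq]
          constructor <;> rw [abs_lt] <;> constructor <;> linarith [hy.1, hy.2, hτ.1, hτ.2]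
        have := h3 (τ, y) hdy
        simp only [Function.uncurry_apply_pair, sol_Us h ht0, Real.dist_eq, sub_zero] at this
        exact this.le)
    rw [Real.norm_eq_abs] at h7
    refine h7.trans (mul_le_mul_of_nonneg_left ?_ hε.le)
    rw [abs_of_pos (by linarith)]
    linarith
  have hB0 : |∫ y in a..s t0, Uext T s u t0 y| ≤ ε * (3 * L * d) := hB t0 ht0I
  have hB0' : |∫ y in a..s t0, Uext T s u t0 y| ≤ ε * (2 * L * d) := by
    have h6 := hsa t0 ht0I
    have h7 := intervalIntegral.norm_integral_le_of_norm_le_const (a := a) (b := s t0)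
      (f := Uext T s u t0) (C := ε) (fun y hy => by
        rw [uIoc_of_le h6.le] at hy
        have hdy : dist (t0, y) (t0, s t0) < r3 := by
          rw [Prod.dist_eq, max_lt_iff]
          simp only [Real.dist_eq]
          constructor <;> rw [abs_lt] <;> constructor <;> linarith [hy.1, hy.2]
        have := h3 (t0, y) hdy
        simp only [Function.uncurry_apply_pair, sol_Us h ht0, Real.dist_eq, sub_zero] at this
        exact this.le)
    rw [Real.norm_eq_abs] at h7
    refine h7.trans (mul_le_mul_of_nonneg_left ?_ hε.le)
    rw [abs_of_pos (by linarith)]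
    linarith
  have hBt := hB t htI
  have hCs : |s t - s t0 - (t - t0) * c| ≤ ε * d := by
    refine (hs1 t htI).trans ?_
    rw [abs_sub_comm, ← hd, abs_of_pos hdpos]
    exact mul_le_mul_of_nonneg_right (min_le_left _ _) hdpos.le
  have split : ∀ τ, Pf T s u τ x = (∫ y in x..a, Uext T s u τ y) + (∫ y in a..s τ, Uext T s u τ y)
      + s τ - x := by
    intro τ
    unfold Pf
    rw [intervalIntegral.integral_add_adjacent_intervals (Uext_ii h _ _ _) (Uext_ii h _ _ _)]
  simp only [smul_eq_mul, Real.norm_eq_abs]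
  have hdt : t - t0 = -d := by rw [hd]; ring
  rw [split t, split t0, hdt, abs_neg, abs_of_pos hdpos]
  rw [hdt] at hCs
  have hfin : (3 + 5 * L) * ε * d ≤ ε' * d := mul_le_mul_of_nonneg_right hεε hdpos.le
  rw [abs_le] at hA hB0' hBt hCs ⊢
  constructor <;> nlinarith [hA.1, hA.2, hB0'.1, hB0'.2, hBt.1, hBt.2, hCs.1, hCs.2]

end sol

theorem rpow_lip {p K a b : ℝ} (hp : 1 < p) (ha : 0 ≤ a) (haK : a ≤ K) (hb : 0 ≤ b) (hbK : b ≤ K) :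
    |a ^ p - b ^ p| ≤ p * K ^ (p - 1) * |a - b| := by
  have := Convex.norm_image_sub_le_of_norm_hasDerivWithin_le (f := fun x : ℝ => x ^ p)
    (f' := fun x => p * x ^ (p - 1)) (C := p * K ^ (p - 1)) (s := Icc 0 K) (x := b) (y := a)
    (fun x _ => (Real.hasDerivAt_rpow_const (Or.inr hp.le)).hasDerivWithinAt)
    (fun x hx => by
      have h1 : 0 ≤ x ^ (p - 1) := Real.rpow_nonneg hx.1 _
      rw [Real.norm_eq_abs, abs_of_nonneg (by positivity)]
      exact mul_le_mul_of_nonneg_left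
        (Real.rpow_le_rpow hx.1 hx.2 (by linarith)) (by linarith))
    (convex_Icc 0 K) ⟨hb, hbK⟩ ⟨ha, haK⟩
  simpa [Real.norm_eq_abs] using this

section two
variable {p s₀ σ₀ T : ℝ} {φ ψ s σ : ℝ → ℝ} {u v : ℝ → ℝ → ℝ}

theorem w_bound (h1 : IsSolOn p s₀ φ T s u) (h2 : IsSolOn p σ₀ ψ T σ v)
    {c C B L : ℝ} (hc : 0 ≤ c) (hB : 0 ≤ B) (hL : (2 * c) ^ 2 ≤ L)
    (hlip : ∀ t ∈ Ioc 0 T, v t 0 ≤ u t 0 → u t 0 ^ p - v t 0 ^ p ≤ c * (u t 0 - v t 0))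
    (hlin : ∀ t ∈ Icc 0 T, ∀ x ∈ Icc 0 (s t), u t x ≤ C * (s t - x))
    (hD : ∀ t ∈ Icc 0 T, C * (s t - σ t) ≤ B * exp (L * t))
    (hinit : ∀ x ∈ Icc 0 (min s₀ σ₀), φ x - ψ x ≤ B) :
    ∀ t ∈ Icc 0 T, ∀ x ∈ Icc 0 (min (s t) (σ t)), u t x - v t x ≤ 2 * B * exp (L * t) := by
  have hcm : ContinuousOn (fun t => min (s t) (σ t)) (Icc 0 T) :=
    continuous_min.comp_continuousOn (h1.s_cont.prodMk h2.s_cont)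
  have hmp' : ∀ t ∈ Icc 0 T, 0 < min (s t) (σ t) := fun t ht =>
    lt_min (h1.s_pos t ht) (h2.s_pos t ht)
  have hL0 : 0 ≤ L := (sq_nonneg _).trans hL
  have hex : ∀ y, HasDerivAt (fun y => exp (-(2 * c * y))) (exp (-(2 * c * y)) * (-(2 * c))) y := by
    intro y
    have : HasDerivAt (fun y => -(2 * c * y)) (-(2 * c)) y := by
      exact ((hasDerivAt_id y).const_mul (2 * c)).neg.congr_deriv (by ring)
    exact this.exp
  have hbx : ∀ t y, HasDerivAt (fun y => B * exp (L * t) * (1 + exp (-(2 * c * y))))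
      (B * exp (L * t) * (exp (-(2 * c * y)) * (-(2 * c)))) y := fun t y =>
    ((hex y).const_add 1).const_mul _
  have hbxx : ∀ t y, HasDerivAt (fun y => B * exp (L * t) * (exp (-(2 * c * y)) * (-(2 * c))))
      (B * exp (L * t) * (exp (-(2 * c * y)) * (-(2 * c)) * (-(2 * c)))) y := fun t y =>
    ((hex y).mul_const _).const_mul _
  have hbt : ∀ t y, HasDerivAt (fun t => B * exp (L * t) * (1 + exp (-(2 * c * y))))
      (B * (exp (L * t) * L) * (1 + exp (-(2 * c * y)))) t := by
    intro t y
    have : HasDerivAt (fun t => L * t) L t := by simpa using (hasDerivAt_id t).const_mul L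
    exact ((this.exp).const_mul B).mul_const _
  have key := hmp T h1.T_pos.le (fun t => min (s t) (σ t)) hcm hmp' (-(c + 1))
    (fun t x => u t x - v t x - B * exp (L * t) * (1 + exp (-(2 * c * x))))
    (fun t x => deriv (u t) x - deriv (v t) x - B * exp (L * t) * (exp (-(2 * c * x)) * (-(2 * c))))
    ?_ ?_ ?_ ?_ ?_ ?_
  · intro t ht x hx
    have h3 := key t ht x hx
    have h4 : exp (-(2 * c * x)) ≤ 1 := by
      rw [exp_le_one_iff]
      have := mul_nonneg (mul_nonneg zero_le_two hc) hx.1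
      linarith
    have h5 : 0 ≤ B * exp (L * t) := by positivity
    nlinarith
  · refine ContinuousOn.sub (ContinuousOn.sub ?_ ?_) ?_
    · exact h1.u_cont.mono fun q hq => ⟨hq.1, hq.2.1, hq.2.2.trans (min_le_left _ _)⟩
    · exact h2.u_cont.mono fun q hq => ⟨hq.1, hq.2.1, hq.2.2.trans (min_le_right _ _)⟩
    · fun_prop
  · intro x hx
    simp only [h1.init_s, h2.init_s] at hx
    rw [h1.init x ⟨hx.1, hx.2.trans (min_le_left _ _)⟩, h2.init x ⟨hx.1, hx.2.trans (min_le_right _ _)⟩]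
    have := hinit x hx
    rw [mul_zero, exp_zero, mul_one]
    have : 0 ≤ B * exp (-(2 * c * x)) := by positivity
    linarith
  · intro t ht x hx
    have hx1 : x ∈ Ioo 0 (s t) := ⟨hx.1, hx.2.trans_le (min_le_left _ _)⟩
    have hx2 : x ∈ Ioo 0 (σ t) := ⟨hx.1, hx.2.trans_le (min_le_right _ _)⟩
    exact ((h1.ux_diff t ht x hx1).hasDerivAt.sub (h2.ux_diff t ht x hx2).hasDerivAt).sub (hbx t x)
  · intro t ht x hx
    have hx1 : x ∈ Ioo 0 (s t) := ⟨hx.1, hx.2.trans_le (min_le_left _ _)⟩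
    have hx2 : x ∈ Ioo 0 (σ t) := ⟨hx.1, hx.2.trans_le (min_le_right _ _)⟩
    refine ⟨_, _, ((h1.uxx_diff t ht x hx1).hasDerivAt.sub
      (h2.uxx_diff t ht x hx2).hasDerivAt).sub (hbxx t x),
      (((h1.ut_diff t ht x hx1).hasDerivAt.sub
      (h2.ut_diff t ht x hx2).hasDerivAt).sub (hbt t x)).hasDerivWithinAt, ?_⟩
    rw [h1.heat t ht x hx1, h2.heat t ht x hx2]
    have h5 : 0 ≤ B * exp (L * t) := by positivity
    have h6 : 0 < exp (-(2 * c * x)) := exp_pos _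
    have h7 : exp (-(2 * c * x)) * (2 * c) ^ 2 ≤ exp (-(2 * c * x)) * L :=
      mul_le_mul_of_nonneg_left hL h6.le
    have h8 : B * exp (L * t) * (exp (-(2 * c * x)) * (2 * c) ^ 2) ≤
        B * exp (L * t) * (L * (1 + exp (-(2 * c * x)))) :=
      mul_le_mul_of_nonneg_left (by linarith) h5
    linarith
  · intro t ht
    by_cases hf : u t 0 - v t 0 - B * exp (L * t) * (1 + exp (-(2 * c * 0))) ≤ 0
    · left; exact hf
    · right; right
      push Not at hf
      have hd := (((sol_ux_right h1 ht).sub (sol_ux_right h2 ht)).sub (hbx t 0).hasDerivWithinAt)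
      refine ⟨_, ?_, hd⟩
      have h5 : 0 ≤ B * exp (L * t) := by positivity
      have e0 : exp (-(2 * c * 0)) = 1 := by simp
      simp only [e0] at hf ⊢
      have h3 := hlip t ht (by linarith)
      have b1 := h1.bc_zero t ht
      have b2 := h2.bc_zero t ht
      simp only [gt_iff_lt]
      nlinarith
  · intro t ht
    left
    have htI : t ∈ Icc 0 T := ⟨ht.1.le, ht.2⟩
    have h5 : 0 ≤ B * exp (L * t) := by positivity
    have h6 : 0 < exp (-(2 * c * min (s t) (σ t))) := exp_pos _
    have h7 : 0 ≤ B * exp (L * t) * exp (-(2 * c * min (s t) (σ t))) := by positivity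
    suffices u t (min (s t) (σ t)) - v t (min (s t) (σ t)) ≤ B * exp (L * t) by
      linarith
    rcases le_total (s t) (σ t) with hle | hle
    · rw [min_eq_left hle, h1.bc_free t ht]
      have := h2.u_nonneg t htI (s t) ⟨(h1.s_pos t htI).le, hle⟩
      linarith
    · rw [min_eq_right hle, h2.bc_free t ht]
      have := hlin t htI (σ t) ⟨(h2.s_pos t htI).le, hle⟩
      have := hD t htI
      linarith

theorem Uext_nonneg (h1 : IsSolOn p s₀ φ T s u) (t x : ℝ) : 0 ≤ Uext T s u t x := by
  have hmem : max 0 (min t T) ∈ Icc 0 T :=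
    ⟨le_max_left _ _, max_le h1.T_pos.le (min_le_right _ _)⟩
  exact h1.u_nonneg _ hmem _ ⟨le_max_left _ _, max_le (h1.s_pos _ hmem).le (min_le_right _ _)⟩

theorem s_bound (h1 : IsSolOn p s₀ φ T s u) (h2 : IsSolOn p σ₀ ψ T σ v)
    {c L S0 : ℝ} (hc : 0 ≤ c) (hL : 0 < L) (hS : 0 ≤ S0)
    (hN : ∀ t ∈ Ioc 0 T, u t 0 ^ p - v t 0 ^ p ≤ c * exp (L * t))
    (hinit : ∀ x ∈ Icc 0 (min s₀ σ₀), Pf T s u 0 x - Pf T σ v 0 x ≤ S0) :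
    ∀ t ∈ Icc 0 T, s t - σ t ≤ S0 + c / L * exp (L * t) := by
  have hcm : ContinuousOn (fun t => min (s t) (σ t)) (Icc 0 T) :=
    continuous_min.comp_continuousOn (h1.s_cont.prodMk h2.s_cont)
  have hmp' : ∀ t ∈ Icc 0 T, 0 < min (s t) (σ t) := fun t ht =>
    lt_min (h1.s_pos t ht) (h2.s_pos t ht)
  have hpos : ∀ t, 0 ≤ c / L * exp (L * t) := fun t => by positivity
  have hP1 : ∀ t x, x ≤ s t → s t - x ≤ Pf T s u t x := fun t x hx => by
    unfold Pf
    have := intervalIntegral.integral_nonneg hx (fun y _ => Uext_nonneg h1 t y) (μ := volume)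
    linarith
  have hP2 : ∀ t x, x ≤ σ t → σ t - x ≤ Pf T σ v t x := fun t x hx => by
    unfold Pf
    have := intervalIntegral.integral_nonneg hx (fun y _ => Uext_nonneg h2 t y) (μ := volume)
    linarith
  have hP1' : ∀ t, Pf T s u t (s t) = 0 := fun t => by unfold Pf; simp
  have hP2' : ∀ t, Pf T σ v t (σ t) = 0 := fun t => by unfold Pf; simp
  have hbt : ∀ t, HasDerivAt (fun t => c / L * exp (L * t)) (c * exp (L * t)) t := by
    intro t
    have : HasDerivAt (fun t => L * t) L t := by simpa using (hasDerivAt_id t).const_mul L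
    exact ((this.exp).const_mul (c / L)).congr_deriv (by field_simp)
  have key := hmp T h1.T_pos.le (fun t => min (s t) (σ t)) hcm hmp' 1
    (fun t x => Pf T s u t x - Pf T σ v t x - S0 - c / L * exp (L * t))
    (fun t x => - u t x - 1 - (- v t x - 1))
    ?_ ?_ ?_ ?_ ?_ ?_
  · intro t ht
    rcases le_total (s t) (σ t) with hle | hle
    · have := hpos t; linarith
    · have h3 := key t ht (σ t) ⟨(h2.s_pos t ht).le, by simp [hle]⟩
      simp only [hP2'] at h3
      have := hP1 t (σ t) hle
      linarith
  · refine ContinuousOn.sub (ContinuousOn.sub (ContinuousOn.sub ?_ ?_) continuousOn_const) ?_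
    · exact (Pf_cont h1).mono fun q hq => hq.1
    · exact (Pf_cont h2).mono fun q hq => hq.1
    · fun_prop
  · intro x hx
    simp only [h1.init_s, h2.init_s] at hx
    have := hinit x hx
    have := hpos 0
    linarith
  · intro t ht x hx
    have htI : t ∈ Icc 0 T := ⟨ht.1.le, ht.2⟩
    have d1 := Pf_deriv_x h1 t x
    have d2 := Pf_deriv_x h2 t x
    rw [Uext_eq htI ⟨hx.1.le, hx.2.le.trans (min_le_left _ _)⟩] at d1
    rw [Uext_eq htI ⟨hx.1.le, hx.2.le.trans (min_le_right _ _)⟩] at d2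
    exact ((d1.sub d2).sub_const S0).sub_const _
  · intro t ht x hx
    have hx1 : x ∈ Ioo 0 (s t) := ⟨hx.1, hx.2.trans_le (min_le_left _ _)⟩
    have hx2 : x ∈ Ioo 0 (σ t) := ⟨hx.1, hx.2.trans_le (min_le_right _ _)⟩
    refine ⟨_, _, ((h1.ux_diff t ht x hx1).hasDerivAt.neg.sub_const 1).sub
      ((h2.ux_diff t ht x hx2).hasDerivAt.neg.sub_const 1),
      (((Pf_deriv_t h1 ht ⟨hx1.1.le, hx1.2⟩).sub (Pf_deriv_t h2 ht ⟨hx2.1.le, hx2.2⟩)).sub_const S0).sub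
        (hbt t).hasDerivWithinAt, ?_⟩
    have : 0 ≤ c * exp (L * t) := by positivity
    linarith
  · intro t ht
    right; left
    have htI : t ∈ Icc 0 T := ⟨ht.1.le, ht.2⟩
    refine ⟨_, ?_, (((Pf_deriv_t h1 ht ⟨le_rfl, h1.s_pos t htI⟩).sub
      (Pf_deriv_t h2 ht ⟨le_rfl, h2.s_pos t htI⟩)).sub_const S0).sub
        (hbt t).hasDerivWithinAt⟩
    have b1 := h1.bc_zero t ht
    have b2 := h2.bc_zero t ht
    have := hN t ht
    linarith
  · intro t ht
    have htI : t ∈ Icc 0 T := ⟨ht.1.le, ht.2⟩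
    by_cases hf : Pf T s u t (min (s t) (σ t)) - Pf T σ v t (min (s t) (σ t)) - S0
        - c / L * exp (L * t) ≤ 0
    · left; exact hf
    · right
      push Not at hf
      rcases le_total (s t) (σ t) with hle | hle
      · exfalso
        rw [min_eq_left hle, hP1'] at hf
        have := hP2 t (s t) hle
        have := hpos t
        linarith
      · rw [min_eq_right hle] at hf ⊢
        refine ⟨_, ?_, ((((Pf_deriv_x h1 t (σ t)).sub (Pf_deriv_x h2 t (σ t))).sub_const S0).sub_const
          (c / L * exp (L * t))).hasDerivWithinAt⟩
        rw [sol_Us h2 ht]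
        have := Uext_nonneg h1 t (σ t)
        linarith

theorem combined (h1 : IsSolOn p s₀ φ T s u) (h2 : IsSolOn p σ₀ ψ T σ v)
    {c C L S0 η : ℝ} (hc : 0 ≤ c) (hC : 0 ≤ C) (hL : 0 < L) (hL1 : (2 * c) ^ 2 ≤ L)
    (hL2 : 4 * (C * c) ≤ L) (hS : 0 ≤ S0) (hη : 0 ≤ η)
    (hlip : ∀ t ∈ Ioc 0 T, |u t 0 ^ p - v t 0 ^ p| ≤ c * |u t 0 - v t 0|)
    (hlin1 : ∀ t ∈ Icc 0 T, ∀ x ∈ Icc 0 (s t), u t x ≤ C * (s t - x))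
    (hlin2 : ∀ t ∈ Icc 0 T, ∀ x ∈ Icc 0 (σ t), v t x ≤ C * (σ t - x))
    (hi1 : ∀ x ∈ Icc 0 (min s₀ σ₀), |φ x - ψ x| ≤ η)
    (hi2 : ∀ x ∈ Icc 0 (min s₀ σ₀), |Pf T s u 0 x - Pf T σ v 0 x| ≤ S0) :
    ∀ t ∈ Icc 0 T, |s t - σ t| ≤ (S0 + c * (4 * η + 4 * C * S0) / L) * exp (L * t) ∧
      ∀ x ∈ Icc 0 (min (s t) (σ t)), |u t x - v t x| ≤ (4 * η + 4 * C * S0) * exp (L * t) := by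
  have hT := h1.T_pos
  have hcu : ContinuousOn (fun t => u t 0) (Icc 0 T) :=
    h1.u_cont.comp (f := fun t => ((t, 0) : ℝ × ℝ)) (by fun_prop)
      (fun t ht => ⟨ht, le_rfl, (h1.s_pos t ht).le⟩)
  have hcv : ContinuousOn (fun t => v t 0) (Icc 0 T) :=
    h2.u_cont.comp (f := fun t => ((t, 0) : ℝ × ℝ)) (by fun_prop)
      (fun t ht => ⟨ht, le_rfl, (h2.s_pos t ht).le⟩)
  obtain ⟨t0, ht0, hmax⟩ := isCompact_Icc.exists_isMaxOn (nonempty_Icc.2 hT.le)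
    (f := fun t => |u t 0 - v t 0| * exp (-(L * t))) ((hcu.sub hcv).abs.mul (by fun_prop))
  set N := |u t0 0 - v t0 0| * exp (-(L * t0)) with hN
  have hN0 : 0 ≤ N := by positivity
  have hNb : ∀ t ∈ Icc 0 T, |u t 0 - v t 0| ≤ N * exp (L * t) := by
    intro t ht
    have h1 : |u t 0 - v t 0| * exp (-(L * t)) ≤ N := hmax ht
    have h2 := mul_le_mul_of_nonneg_right h1 (exp_pos (L * t)).le
    rwa [mul_assoc, ← exp_add, neg_add_cancel, exp_zero, mul_one] at h2
  have hfl : ∀ t ∈ Ioc 0 T, |u t 0 ^ p - v t 0 ^ p| ≤ c * N * exp (L * t) := by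
    intro t ht
    refine (hlip t ht).trans ?_
    rw [mul_assoc]
    exact mul_le_mul_of_nonneg_left (hNb t ⟨ht.1.le, ht.2⟩) hc
  have hcN : 0 ≤ c * N := by positivity
  set D := S0 + c * N / L with hD
  have hD0 : 0 ≤ D := by positivity
  have a1 := s_bound h1 h2 hcN hL hS (fun t ht => (abs_le.1 (hfl t ht)).2)
    (fun x hx => (abs_le.1 (hi2 x hx)).2)
  have a2 := s_bound h2 h1 hcN hL hS (fun t ht => by linarith [(abs_le.1 (hfl t ht)).1])
    (fun x hx => by rw [min_comm] at hx; linarith [(abs_le.1 (hi2 x hx)).1])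
  have hexp : ∀ t ∈ Icc 0 T, 1 ≤ exp (L * t) := fun t ht =>
    one_le_exp (mul_nonneg hL.le ht.1)
  have hDb : ∀ t ∈ Icc 0 T, S0 + c * N / L * exp (L * t) ≤ D * exp (L * t) := by
    intro t ht
    have := mul_le_mul_of_nonneg_left (hexp t ht) hS
    rw [hD, add_mul]; linarith
  set B := η + C * D with hB
  have hB0 : 0 ≤ B := by positivity
  have hDB : ∀ t ∈ Icc 0 T, ∀ y, y ≤ D * exp (L * t) → C * y ≤ B * exp (L * t) := by
    intro t ht y hy
    have := mul_le_mul_of_nonneg_left hy hC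
    have h3 : 0 ≤ η * exp (L * t) := by positivity
    rw [hB, add_mul]; linarith
  have hηB : η ≤ B := by rw [hB]; linarith [mul_nonneg hC hD0]
  have w1 := w_bound h1 h2 hc hB0 hL1
    (fun t ht hle => by
      have := (abs_le.1 (hlip t ht)).2
      rwa [abs_of_nonneg (by linarith)] at this) hlin1
    (fun t ht => hDB t ht _ ((a1 t ht).trans (hDb t ht)))
    (fun x hx => (abs_le.1 (hi1 x hx)).2.trans hηB)
  have w2 := w_bound h2 h1 hc hB0 hL1
    (fun t ht hle => by
      have := (abs_le.1 (hlip t ht)).1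
      rw [abs_sub_comm, abs_of_nonneg (by linarith)] at this
      linarith) hlin2
    (fun t ht => hDB t ht _ ((a2 t ht).trans (hDb t ht)))
    (fun x hx => by
      rw [min_comm] at hx
      linarith [(abs_le.1 (hi1 x hx)).1])
  have wb : ∀ t ∈ Icc 0 T, ∀ x ∈ Icc 0 (min (s t) (σ t)), |u t x - v t x| ≤ 2 * B * exp (L * t) := by
    intro t ht x hx
    rw [abs_le]
    have := w1 t ht x hx
    have := w2 t ht x (by rwa [min_comm])
    constructor <;> linarith
  have hNB : N ≤ 2 * B := by
    have h3 := wb t0 ht0 0 ⟨le_rfl, le_min (h1.s_pos t0 ht0).le (h2.s_pos t0 ht0).le⟩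
    have h4 := mul_le_mul_of_nonneg_right h3 (exp_pos (-(L * t0))).le
    rw [mul_assoc, ← exp_add, add_neg_cancel, exp_zero, mul_one] at h4
    exact h4
  have hCc : C * (c * N / L) ≤ N / 4 := by
    rw [← mul_div_assoc, div_le_iff₀ hL]
    nlinarith
  have hCD : C * D = C * S0 + C * (c * N / L) := by rw [hD]; ring
  have hNle : N ≤ 4 * η + 4 * C * S0 := by linarith
  intro t ht
  constructor
  · have h3 : |s t - σ t| ≤ D * exp (L * t) := by
      rw [abs_le]
      have := a1 t ht
      have := a2 t ht
      have := hDb t ht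
      constructor <;> linarith
    refine h3.trans (mul_le_mul_of_nonneg_right ?_ (exp_pos _).le)
    rw [hD]
    have : c * N / L ≤ c * (4 * η + 4 * C * S0) / L := by gcongr
    linarith
  · intro x hx
    refine (wb t ht x hx).trans (mul_le_mul_of_nonneg_right ?_ (exp_pos _).le)
    linarith

theorem init_P (h1 : IsSolOn p s₀ φ T s u) (h2 : IsSolOn p σ₀ ψ T σ v)
    (hφ : φ s₀ = 0) (hψ : ψ σ₀ = 0) (hs₀ : 0 < s₀) (hσ₀ : 0 < σ₀)
    {η : ℝ} (hη : η ≤ 1) (hi0 : |s₀ - σ₀| ≤ η)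
    (hi : ∀ x, 0 ≤ x → |extZero s₀ φ x - extZero σ₀ ψ x| ≤ η) :
    ∀ x ∈ Icc 0 (min s₀ σ₀), |Pf T s u 0 x - Pf T σ v 0 x| ≤ (2 + s₀) * η := by
  have hη0 : 0 ≤ η := (abs_nonneg _).trans hi0
  have hT := h1.T_pos
  have e1 : ∀ {s₀ : ℝ} {φ s : ℝ → ℝ} {u : ℝ → ℝ → ℝ}, IsSolOn p s₀ φ T s u → φ s₀ = 0 → 0 < s₀ →
      ∀ y, 0 ≤ y → Uext T s u 0 y = extZero s₀ φ y := by
    intro s₀ φ s u h hφ hs₀ y hy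
    unfold Uext extZero
    rw [min_eq_left hT.le, max_self, h.init_s]
    split_ifs with hy2
    · rw [min_eq_left hy2.2, max_eq_right hy2.1, h.init y hy2]
    · have : s₀ < y := by
        by_contra hcon
        exact hy2 ⟨hy, not_lt.1 hcon⟩
      rw [min_eq_right this.le, max_eq_right hs₀.le, h.init s₀ ⟨hs₀.le, le_rfl⟩, hφ]
  have e2 : ∀ {s₀ : ℝ} {φ s : ℝ → ℝ} {u : ℝ → ℝ → ℝ}, IsSolOn p s₀ φ T s u → φ s₀ = 0 → 0 < s₀ →
      ∀ x X, s₀ ≤ X → Pf T s u 0 x = (∫ y in x..X, Uext T s u 0 y) + s₀ - x := by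
    intro s₀ φ s u h hφ hs₀ x X hX
    unfold Pf
    rw [h.init_s, ← intervalIntegral.integral_add_adjacent_intervals (b := s₀) (c := X)
      (Uext_ii h 0 x s₀) (Uext_ii h 0 s₀ X)]
    have : ∫ y in s₀..X, Uext T s u 0 y = 0 := by
      refine intervalIntegral.integral_zero_ae (Eventually.of_forall fun y hy => ?_)
      rw [uIoc_of_le hX] at hy
      rw [e1 h hφ hs₀ y (hs₀.le.trans hy.1.le)]
      unfold extZero
      rw [if_neg]
      intro hcon
      linarith [hy.1, hcon.2]
    rw [this, add_zero]
  intro x hx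
  have hxs : x ≤ s₀ := hx.2.trans (min_le_left _ _)
  set X := max s₀ σ₀ with hX
  have hxX : x ≤ X := hxs.trans (le_max_left _ _)
  have hXb : X ≤ s₀ + 1 := by
    rw [hX]
    refine max_le (by linarith) ?_
    linarith [(abs_le.1 hi0).1]
  rw [e2 h1 hφ hs₀ x X (le_max_left _ _), e2 h2 hψ hσ₀ x X (le_max_right _ _)]
  have h3 : |(∫ y in x..X, Uext T s u 0 y) - ∫ y in x..X, Uext T σ v 0 y| ≤ η * (X - x) := by
    rw [← intervalIntegral.integral_sub (Uext_ii h1 _ _ _) (Uext_ii h2 _ _ _)]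
    have := intervalIntegral.norm_integral_le_of_norm_le_const (a := x) (b := X)
      (f := fun y => Uext T s u 0 y - Uext T σ v 0 y) (C := η) (fun y hy => by
        rw [uIoc_of_le hxX] at hy
        have hy0 : 0 ≤ y := hx.1.trans hy.1.le
        rw [e1 h1 hφ hs₀ y hy0, e1 h2 hψ hσ₀ y hy0]
        exact hi y hy0)
    rwa [Real.norm_eq_abs, abs_of_nonneg (sub_nonneg.2 hxX)] at this
  have h4 : η * (X - x) ≤ η * (s₀ + 1) := mul_le_mul_of_nonneg_left (by linarith [hx.1]) hη0
  rw [abs_le] at h3 hi0 ⊢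
  constructor <;> linarith [h3.1, h3.2, hi0.1, hi0.2]

end two

/-- Proposition 2.2: continuous dependence on the initial data; `η` depends only on
`ε`, `p`, `s₀`, the bound `K` on `sup_{t∈(0,T]} u(t,0)`, `T`, and `M`. -/
theorem stmt_7 (p : ℝ) (hp : 1 < p) (ε : ℝ) (hε : 0 < ε) (s₀ K T M : ℝ)
    (hT : 0 < T) (hM : 0 < M) :
    ∃ η : ℝ, 0 < η ∧
      ∀ (φ : ℝ → ℝ) (s : ℝ → ℝ) (u : ℝ → ℝ → ℝ)
        (σ₀ : ℝ) (ψ : ℝ → ℝ) (σ : ℝ → ℝ) (v : ℝ → ℝ → ℝ),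
        memW s₀ φ → memW σ₀ ψ →
        IsSolOn p s₀ φ T s u → IsSolOn p σ₀ ψ T σ v →
        (∀ t ∈ Ioc 0 T, u t 0 ≤ K) →
        (∀ x ∈ Icc 0 s₀, φ x ≤ M * (s₀ - x)) →
        (∀ x ∈ Icc 0 σ₀, ψ x ≤ M * (σ₀ - x)) →
        |s₀ - σ₀| + sSup ((fun x => |extZero s₀ φ x - extZero σ₀ ψ x|) '' Ici 0) ≤ η →
        sSup ((fun t => |s t - σ t|) '' Ioc 0 T) +
          sSup ((fun t => sSup ((fun x =>
            |extZero (s t) (u t) x - extZero (σ t) (v t) x|) '' Ici 0)) '' Ioc 0 T) ≤ ε := by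
  by_cases hs₀ : 0 < s₀
  swap
  · exact ⟨1, one_pos, fun φ s u σ₀ ψ σ v hW => absurd hW.1 hs₀⟩
  set K' := |K| + 1 with hK'
  have hK'0 : 0 < K' := by positivity
  set C := M + 2 * K' / s₀ with hC
  have hC0 : 0 < C := by positivity
  set c := p * K' ^ (p - 1) with hc
  have hc0 : 0 < c := by
    have : 0 < K' ^ (p - 1) := Real.rpow_pos_of_pos hK'0 _
    have : 0 < p := by linarith
    positivity
  set L := (2 * c) ^ 2 + 4 * (C * c) + 1 with hL
  have hCc : 0 < C * c := by positivity
  have hL0 : 0 < L := by positivity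
  have hL1 : (2 * c) ^ 2 ≤ L := by rw [hL]; linarith
  have hL2 : 4 * (C * c) ≤ L := by rw [hL]; linarith [sq_nonneg (2 * c)]
  set n := 4 + 4 * C * (2 + s₀) with hn
  have hn0 : 0 < n := by positivity
  set d := (2 + s₀) + c * n / L with hd
  have hd0 : 0 < d := by positivity
  set G := (d + (n + C * d)) * exp (L * T) with hG
  have hG0 : 0 < G := by positivity
  set η := min (min 1 (s₀ / 2)) (min (ε / G) (1 / (2 * n * exp (L * T)))) with hη
  have hη0 : 0 < η := by simp only [hη]; positivity
  have hη1 : η ≤ 1 := (min_le_left _ _).trans (min_le_left _ _)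
  have hη2 : η ≤ s₀ / 2 := (min_le_left _ _).trans (min_le_right _ _)
  have hη3 : η * G ≤ ε := by
    rw [← le_div_iff₀ hG0]; exact (min_le_right _ _).trans (min_le_left _ _)
  have hη4 : η * (2 * n * exp (L * T)) ≤ 1 := by
    rw [← le_div_iff₀ (by positivity)]; exact (min_le_right _ _).trans (min_le_right _ _)
  clear_value η
  refine ⟨η, hη0, ?_⟩
  intro φ s u σ₀ ψ σ v hW1 hW2 h1 h2 hK hφM hψM hdata
  have hσ₀ : 0 < σ₀ := hW2.1
  have hext : ∀ {a : ℝ} {f : ℝ → ℝ}, 0 < a → (∀ x ∈ Icc 0 a, 0 ≤ f x) →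
      (∀ x ∈ Icc 0 a, f x ≤ M * (a - x)) → ∀ x, |extZero a f x| ≤ M * a := by
    intro a f ha h1 h2 x
    unfold extZero
    split_ifs with hx
    · rw [abs_of_nonneg (h1 x hx)]
      refine (h2 x hx).trans (mul_le_mul_of_nonneg_left (by linarith [hx.1]) hM.le)
    · rw [abs_zero]; positivity
  have hbdd : BddAbove ((fun x => |extZero s₀ φ x - extZero σ₀ ψ x|) '' Ici 0) := by
    refine ⟨M * s₀ + M * σ₀, ?_⟩
    rintro _ ⟨x, _, rfl⟩
    exact (abs_sub _ _).trans (add_le_add (hext hs₀ hW1.2.2.2.1 hφM x) (hext hσ₀ hW2.2.2.2.1 hψM x))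
  have hsup0 : 0 ≤ sSup ((fun x => |extZero s₀ φ x - extZero σ₀ ψ x|) '' Ici 0) := by
    apply Real.sSup_nonneg
    rintro _ ⟨x, _, rfl⟩
    exact abs_nonneg _
  have hi0 : |s₀ - σ₀| ≤ η := by linarith
  have hi : ∀ x, 0 ≤ x → |extZero s₀ φ x - extZero σ₀ ψ x| ≤ η := by
    intro x hx
    have := le_csSup hbdd ⟨x, hx, rfl⟩
    have h3 := abs_nonneg (s₀ - σ₀)
    simp only at this
    linarith
  have hi1 : ∀ x ∈ Icc 0 (min s₀ σ₀), |φ x - ψ x| ≤ η := by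
    intro x hx
    have := hi x hx.1
    unfold extZero at this
    rwa [if_pos ⟨hx.1, hx.2.trans (min_le_left _ _)⟩,
      if_pos ⟨hx.1, hx.2.trans (min_le_right _ _)⟩] at this
  have hσ₀2 : s₀ / 2 ≤ σ₀ := by linarith [(abs_le.1 hi0).2]
  have hKK : K ≤ |K| := le_abs_self K
  have hMC : M ≤ C := by
    have : 0 ≤ 2 * K' / s₀ := by positivity
    rw [hC]; linarith
  have hKs : ∀ a, s₀ / 2 ≤ a → K' ≤ C * a := by
    intro a ha
    have h3 : C * (s₀ / 2) ≤ C * a := mul_le_mul_of_nonneg_left ha hC0.le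
    have h4 : C * (s₀ / 2) = M * s₀ / 2 + K' := by rw [hC]; field_simp
    have : 0 < M * s₀ := by positivity
    linarith
  -- the conditional estimate
  have main : ∀ T', 0 < T' → T' ≤ T → (∀ t ∈ Icc 0 T', |u t 0 - v t 0| ≤ 1) →
      ∀ t ∈ Icc 0 T', |s t - σ t| ≤ d * η * exp (L * T) ∧
        (∀ x ∈ Icc 0 (min (s t) (σ t)), |u t x - v t x| ≤ n * η * exp (L * T)) ∧
        (∀ x ∈ Icc 0 (s t), u t x ≤ C * (s t - x)) ∧
        (∀ x ∈ Icc 0 (σ t), v t x ≤ C * (σ t - x)) := by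
    intro T' hT'0 hT'T hw
    have g1 := sol_restrict h1 hT'0 hT'T
    have g2 := sol_restrict h2 hT'0 hT'T
    have hu : ∀ t ∈ Ioc 0 T', u t 0 ≤ K' := fun t ht => by
      have := hK t ⟨ht.1, ht.2.trans hT'T⟩
      linarith
    have hv : ∀ t ∈ Ioc 0 T', v t 0 ≤ K' := fun t ht => by
      have := hK t ⟨ht.1, ht.2.trans hT'T⟩
      have := (abs_le.1 (hw t ⟨ht.1.le, ht.2⟩)).1
      linarith
    have l1 := sol_lin g1 hC0.le hMC (hKs s₀ (by linarith)) hu hφM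
    have l2 := sol_lin g2 hC0.le hMC (hKs σ₀ hσ₀2) hv hψM
    have hS : 0 ≤ (2 + s₀) * η := by positivity
    have key := combined g1 g2 hc0.le hC0.le hL0 hL1 hL2 hS hη0.le
      (fun t ht => by
        have htI : t ∈ Icc 0 T' := ⟨ht.1.le, ht.2⟩
        exact rpow_lip hp (g1.u_nonneg t htI 0 ⟨le_rfl, (g1.s_pos t htI).le⟩) (hu t ht)
          (g2.u_nonneg t htI 0 ⟨le_rfl, (g2.s_pos t htI).le⟩) (hv t ht)) l1 l2 hi1
      (init_P g1 g2 hW1.2.2.2.2 hW2.2.2.2.2 hs₀ hσ₀ hη1 hi0 hi)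
    have en : 4 * η + 4 * C * ((2 + s₀) * η) = n * η := by rw [hn]; ring
    have ed : (2 + s₀) * η + c * (n * η) / L = d * η := by rw [hd]; ring
    rw [en, ed] at key
    intro t ht
    have hexp : exp (L * t) ≤ exp (L * T) :=
      exp_le_exp.2 (mul_le_mul_of_nonneg_left (ht.2.trans hT'T) hL0.le)
    refine ⟨(key t ht).1.trans ?_, fun x hx => ((key t ht).2 x hx).trans ?_, l1 t ht, l2 t ht⟩
    · exact mul_le_mul_of_nonneg_left hexp (by positivity)
    · exact mul_le_mul_of_nonneg_left hexp (by positivity)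
  -- bootstrap
  have hcu : ContinuousOn (fun t => u t 0) (Icc 0 T) :=
    h1.u_cont.comp (f := fun t => ((t, 0) : ℝ × ℝ)) (by fun_prop)
      (fun t ht => ⟨ht, le_rfl, (h1.s_pos t ht).le⟩)
  have hcv : ContinuousOn (fun t => v t 0) (Icc 0 T) :=
    h2.u_cont.comp (f := fun t => ((t, 0) : ℝ × ℝ)) (by fun_prop)
      (fun t ht => ⟨ht, le_rfl, (h2.s_pos t ht).le⟩)
  have hcw : ContinuousOn (fun t => |u t 0 - v t 0|) (Icc 0 T) := (hcu.sub hcv).abs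
  have hboot : ∀ t ∈ Icc 0 T, |u t 0 - v t 0| ≤ 1 := by
    by_contra hcon
    push Not at hcon
    obtain ⟨t1, ht1, ht1'⟩ := hcon
    set A := {t ∈ Icc 0 T | 1 ≤ |u t 0 - v t 0|} with hA
    have hAc : IsCompact A := by
      refine isCompact_Icc.of_isClosed_subset ?_ (fun t ht => ht.1)
      exact hcw.preimage_isClosed_of_isClosed isClosed_Icc isClosed_Ici
    obtain ⟨t0, ht0, hmin⟩ := hAc.exists_isLeast ⟨t1, ht1, ht1'.le⟩
    have hlt : ∀ t ∈ Icc 0 T, t < t0 → |u t 0 - v t 0| < 1 := by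
      intro t ht htt
      by_contra hge
      exact absurd (hmin ⟨ht, not_lt.1 hge⟩) (not_le.2 htt)
    have hnE : n * η * exp (L * T) ≤ 1 / 2 := by linarith
    have h00 : |u 0 0 - v 0 0| < 1 := by
      have m0 : (0:ℝ) ∈ Icc 0 (min s₀ σ₀) := ⟨le_rfl, le_min hs₀.le hσ₀.le⟩
      rw [h1.init 0 ⟨le_rfl, hs₀.le⟩, h2.init 0 ⟨le_rfl, hσ₀.le⟩]
      have e1 : 1 ≤ exp (L * T) := one_le_exp (by positivity)
      have e2 : 1 ≤ n := by
        have : 0 < 4 * C * (2 + s₀) := by positivity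
        rw [hn]; linarith
      have e3 : 1 ≤ n * exp (L * T) := one_le_mul_of_one_le_of_one_le e2 e1
      have e4 : η * 1 ≤ η * (n * exp (L * T)) := mul_le_mul_of_nonneg_left e3 hη0.le
      have := hi1 0 m0
      linarith
    have ht0pos : 0 < t0 := by
      rcases eq_or_lt_of_le ht0.1.1 with h | h
      · exfalso
        have := ht0.2
        rw [← h] at this
        linarith
      · exact h
    have hle : |u t0 0 - v t0 0| ≤ 1 := by
      have hle' : 𝓝[<] t0 ≤ 𝓝[Icc 0 T] t0 := by
        rw [nhdsWithin_le_iff]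
        filter_upwards [Ioo_mem_nhdsLT ht0pos] with τ hτ
        exact ⟨hτ.1.le, hτ.2.le.trans ht0.1.2⟩
      refine le_of_tendsto ((hcw t0 ht0.1).tendsto.mono_left hle') ?_
      filter_upwards [Ioo_mem_nhdsLT ht0pos] with τ hτ
      exact (hlt τ ⟨hτ.1.le, hτ.2.le.trans ht0.1.2⟩ hτ.2).le
    have h3 := (main t0 ht0pos ht0.1.2 (fun t ht => by
      rcases eq_or_lt_of_le ht.2 with h | h
      · rw [h]; exact hle
      · exact (hlt t ⟨ht.1, ht.2.trans ht0.1.2⟩ h).le) t0 ⟨ht0pos.le, le_rfl⟩).2.1 0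
      ⟨le_rfl, le_min (h1.s_pos t0 ht0.1).le (h2.s_pos t0 ht0.1).le⟩
    have := ht0.2
    linarith
  have fin := main T hT le_rfl hboot
  have hGe : d * η * exp (L * T) + (n * η * exp (L * T) + C * (d * η * exp (L * T))) ≤ ε := by
    have : d * η * exp (L * T) + (n * η * exp (L * T) + C * (d * η * exp (L * T))) = η * G := by
      rw [hG]; ring
    rw [this]; exact hη3
  have hp1 : 0 ≤ d * η * exp (L * T) := by positivity
  have hp2 : 0 ≤ n * η * exp (L * T) := by positivity
  have hp3 : 0 ≤ C * (d * η * exp (L * T)) := by positivity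
  refine (add_le_add (Real.sSup_le ?_ hp1) (Real.sSup_le ?_ (add_nonneg hp2 hp3))).trans hGe
  · rintro _ ⟨t, ht, rfl⟩
    exact (fin t ⟨ht.1.le, ht.2⟩).1
  · rintro _ ⟨t, ht, rfl⟩
    refine Real.sSup_le ?_ (add_nonneg hp2 hp3)
    rintro _ ⟨x, hx, rfl⟩
    have htI : t ∈ Icc 0 T := ⟨ht.1.le, ht.2⟩
    obtain ⟨f1, f2, f3, f4⟩ := fin t htI
    have hx0 : 0 ≤ x := hx
    simp only
    unfold extZero
    split_ifs with q1 q2 q2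
    · have := f2 x ⟨hx0, le_min q1.2 q2.2⟩
      linarith
    · have hxσ : σ t < x := by
        by_contra hcon
        exact q2 ⟨hx0, not_lt.1 hcon⟩
      rw [sub_zero, abs_of_nonneg (h1.u_nonneg t htI x q1)]
      have e1 := f3 x q1
      have e2 : C * (s t - x) ≤ C * (d * η * exp (L * T)) :=
        mul_le_mul_of_nonneg_left (by linarith [(abs_le.1 f1).2]) hC0.le
      linarith
    · have hxσ : s t < x := by
        by_contra hcon
        exact q1 ⟨hx0, not_lt.1 hcon⟩
      rw [zero_sub, abs_neg, abs_of_nonneg (h2.u_nonneg t htI x q2)]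
      have e1 := f4 x q2
      have e2 : C * (σ t - x) ≤ C * (d * η * exp (L * T)) :=
        mul_le_mul_of_nonneg_left (by linarith [(abs_le.1 f1).1]) hC0.le
      linarith
    · rw [sub_zero, abs_zero]
      linarith
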